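/- Let ρ and σ be density matrices on a finite-dimensional Hilbert space. Then S_∞(ρ‖σ) ≥ S(ρ‖σ), i.e., the max-relative entropy is at least the relative entropy. -/

import Mathlib

open scoped Kronecker ComplexOrder Classical

/-- A density matrix: positive semidefinite with unit trace. -/
def IsDensity {n : Type*} [Fintype n] [DecidableEq n] (ρ : Matrix n n ℂ) : Prop :=
  ρ.PosSemidef ∧ ρ.trace = 1

/-- Matrix logarithm of a Hermitian matrix via the spectral theorem
(with the convention `log 0 = 0` on the kernel; junk value `0` if not Hermitian). -/
noncomputable def mlog {n : Type*} [Fintype n] [DecidableEq n]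
    (M : Matrix n n ℂ) : Matrix n n ℂ :=
  if h : M.IsHermitian then
    (h.eigenvectorUnitary : Matrix n n ℂ) *
      Matrix.diagonal (fun i => (Real.log (h.eigenvalues i) : ℂ)) *
        star (h.eigenvectorUnitary : Matrix n n ℂ)
  else 0

/-- Quantum relative entropy `S(ρ‖σ) = Tr(ρ log ρ) - Tr(ρ log σ)`, with value `⊤`
when the support of `ρ` is not contained in the support of `σ`. -/
noncomputable def relEnt {n : Type*} [Fintype n] [DecidableEq n]
    (ρ σ : Matrix n n ℂ) : EReal :=
  if ∀ v : n → ℂ, σ.mulVec v = 0 → ρ.mulVec v = 0 then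
    ((((ρ * mlog ρ).trace - (ρ * mlog σ).trace).re : ℝ) : EReal)
  else ⊤

/-- Max-relative entropy `S_∞(ρ‖σ) = inf {k : ρ ≤ 2^k σ}` (as an extended real). -/
noncomputable def maxRelEnt {n : Type*} [Fintype n] [DecidableEq n]
    (ρ σ : Matrix n n ℂ) : EReal :=
  sInf {k : EReal | ∃ r : ℝ, k = (r : EReal) ∧
    ((((2 : ℝ) ^ r : ℝ) : ℂ) • σ - ρ).PosSemidef}

open Matrix in
theorem Matrix.IsHermitian.eq_eigenvectorUnitary_mul_diagonal_mul_star
    {n : Type*} [Fintype n] [DecidableEq n] {A : Matrix n n ℂ} (hA : A.IsHermitian) :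
    A = (hA.eigenvectorUnitary : Matrix n n ℂ) * diagonal (fun i => (hA.eigenvalues i : ℂ)) *
      star (hA.eigenvectorUnitary : Matrix n n ℂ) := by
  conv_lhs => rw [hA.spectral_theorem, Unitary.conjStarAlgAut_apply]
  rfl

/-- The squared moduli of the overlaps between two orthonormal bases, given as the columns of
`U` and `V`. -/
noncomputable def overlap {n : Type*} [Fintype n] (U V : Matrix n n ℂ) (i j : n) : ℝ :=
  Complex.normSq ((star U * V) i j)

open Matrix in
theorem trace_mul_diagonal_conj {n : Type*} [Fintype n] [DecidableEq n]
    (U V : Matrix n n ℂ) (p l : n → ℝ) :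
    ((U * diagonal (fun i => (p i : ℂ)) * star U) *
      (V * diagonal (fun j => (l j : ℂ)) * star V)).trace =
      ((∑ i, p i * ∑ j, overlap U V i j * l j : ℝ) : ℂ) := by
  have h : ((U * diagonal (fun i => (p i : ℂ)) * star U) *
      (V * diagonal (fun j => (l j : ℂ)) * star V)).trace =
      (diagonal (fun i => (p i : ℂ)) *
        ((star U * V) * (diagonal (fun j => (l j : ℂ)) * star (star U * V)))).trace := by
    rw [star_mul, star_star, Matrix.mul_assoc, Matrix.mul_assoc, Matrix.trace_mul_comm]
    simp only [Matrix.mul_assoc]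
  rw [h]
  simp only [trace, diag_apply, diagonal_mul, mul_apply (M := star U * V), overlap,
    star_apply, Complex.ofReal_sum, Complex.ofReal_mul, Complex.normSq_eq_conj_mul_self]
  refine Finset.sum_congr rfl fun i _ => ?_
  congr 1
  refine Finset.sum_congr rfl fun j _ => ?_
  simp only [RCLike.star_def]
  ring

theorem sum_overlap_eq_one {n : Type*} [Fintype n] [DecidableEq n]
    (U V : Matrix.unitaryGroup n ℂ) (i : n) :
    ∑ j, overlap (U : Matrix n n ℂ) V i j = 1 := by
  have h : (star (U : Matrix n n ℂ) * (V : Matrix n n ℂ))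
      * star (star (U : Matrix n n ℂ) * (V : Matrix n n ℂ)) = 1 :=
    Unitary.coe_mul_star_self (star U * V)
  have h' := congrFun (congrFun h i) i
  rw [Matrix.mul_apply, Matrix.one_apply_eq] at h'
  apply Complex.ofReal_injective
  rw [Complex.ofReal_sum, Complex.ofReal_one, ← h']
  refine Finset.sum_congr rfl fun j _ => ?_
  rw [overlap, Complex.normSq_eq_conj_mul_self, Matrix.star_apply, RCLike.star_def, mul_comm]

theorem overlap_self {n : Type*} [Fintype n] [DecidableEq n]
    (U : Matrix.unitaryGroup n ℂ) (i j : n) :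
    overlap (U : Matrix n n ℂ) U i j = if i = j then 1 else 0 := by
  rw [overlap, Unitary.coe_star_mul_self, Matrix.one_apply]
  split_ifs <;> simp

open Matrix in
/-- The operator inequality `ρ ≤ c σ` as an inequality of quadratic forms in the eigenbasis
of `σ`. -/
theorem sum_mul_normSq_le {n : Type*} [Fintype n] [DecidableEq n]
    (U V : unitaryGroup n ℂ) (p q : n → ℝ) (c : ℝ)
    (h : ((c : ℂ) •
        ((V : Matrix n n ℂ) * diagonal (fun i => (q i : ℂ)) * star (V : Matrix n n ℂ)) -
      (U : Matrix n n ℂ) * diagonal (fun i => (p i : ℂ)) * star (U : Matrix n n ℂ)).PosSemidef)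
    (y : n → ℂ) :
    ∑ i, p i * Complex.normSq (((star (U : Matrix n n ℂ) * (V : Matrix n n ℂ)) *ᵥ y) i) ≤
      c * ∑ j, q j * Complex.normSq (y j) := by
  have hV : star (V : Matrix n n ℂ) * V = 1 := Unitary.coe_star_mul_self V
  have key : ∀ (d : n → ℝ) (z : n → ℂ), star z ⬝ᵥ (diagonal (fun i => (d i : ℂ)) *ᵥ z) =
      ((∑ i, d i * Complex.normSq (z i) : ℝ) : ℂ) := by
    intro d z
    simp only [dotProduct, mulVec_diagonal, Complex.ofReal_sum, Complex.ofReal_mul,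
      Complex.normSq_eq_conj_mul_self, Pi.star_apply, RCLike.star_def]
    exact Finset.sum_congr rfl fun i _ => by ring
  have h1 := h.dotProduct_mulVec_nonneg ((V : Matrix n n ℂ) *ᵥ y)
  have conj : ∀ (T : Matrix n n ℂ) (d : n → ℝ),
      star ((V : Matrix n n ℂ) *ᵥ y) ⬝ᵥ
        ((T * diagonal (fun i => (d i : ℂ)) * star T) *ᵥ ((V : Matrix n n ℂ) *ᵥ y)) =
      ((∑ i, d i * Complex.normSq (((star T * (V : Matrix n n ℂ)) *ᵥ y) i) : ℝ) : ℂ) := by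
    intro T d
    rw [← key d, ← mulVec_mulVec (M := star T), star_mulVec (star T), dotProduct_mulVec,
      dotProduct_mulVec, dotProduct_mulVec, ← vecMul_vecMul, ← vecMul_vecMul,
      ← star_eq_conjTranspose, star_star, dotProduct_mulVec, dotProduct_mulVec]
  rw [sub_mulVec, smul_mulVec, dotProduct_sub, dotProduct_smul, conj, conj, hV, one_mulVec,
    smul_eq_mul, ← Complex.ofReal_mul, ← Complex.ofReal_sub, Complex.zero_le_real] at h1
  linarith

/-- Jensen's inequality for the logarithm, in the form comparing `log p` with the average of
`log q`. -/
theorem log_sub_sum_mul_log_le {n : Type*} [Fintype n] {p c : ℝ} (hp : 0 < p) (hc : 0 < c)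
    {w q : n → ℝ} (hw : ∀ j, 0 ≤ w j) (hq : ∀ j, 0 ≤ q j) (hw1 : ∑ j, w j = 1)
    (h0 : ∀ j, q j = 0 → w j = 0) (hs : p * ∑ j, w j / q j ≤ c) :
    Real.log p - ∑ j, w j * Real.log (q j) ≤ Real.log c := by
  have h : ∀ j, w j * (Real.log p - Real.log (q j) - Real.log c) ≤ p / c * (w j / q j) - w j := by
    intro j
    rcases (hq j).eq_or_lt with hj | hj
    · simp [h0 j hj.symm]
    · have := Real.log_le_sub_one_of_pos (show 0 < p / q j / c by positivity)
      rw [Real.log_div (by positivity) hc.ne', Real.log_div hp.ne' hj.ne'] at this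
      calc _ ≤ w j * (p / q j / c - 1) := mul_le_mul_of_nonneg_left this (hw j)
        _ = _ := by ring
  have h' := Finset.sum_le_sum fun j (_ : j ∈ Finset.univ) => h j
  have e : ∑ j, w j * (Real.log p - Real.log (q j) - Real.log c) =
      Real.log p - ∑ j, w j * Real.log (q j) - Real.log c := by
    simp only [mul_sub, Finset.sum_sub_distrib, ← Finset.sum_mul, hw1, one_mul]
  rw [e, Finset.sum_sub_distrib, ← Finset.mul_sum, hw1] at h'
  have : p / c * ∑ j, w j / q j ≤ 1 := by
    rw [div_mul_eq_mul_div]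
    exact (div_le_one hc).2 hs
  linarith

open Matrix in
/-- If `ρ ≤ c σ` then `Tr (ρ log ρ) - Tr (ρ log σ) ≤ log c`. -/
theorem trace_mul_mlog_sub_le_log {n : Type*} [Fintype n] [DecidableEq n]
    {ρ σ : Matrix n n ℂ} (hρ : IsDensity ρ) (hσ : σ.PosSemidef) {c : ℝ} (hc : 0 < c)
    (h : ((c : ℂ) • σ - ρ).PosSemidef) :
    ((ρ * mlog ρ).trace - (ρ * mlog σ).trace).re ≤ Real.log c := by
  obtain ⟨hρ, hρ1⟩ := hρ
  have eρ := hρ.isHermitian.eq_eigenvectorUnitary_mul_diagonal_mul_star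
  have eσ := hσ.isHermitian.eq_eigenvectorUnitary_mul_diagonal_mul_star
  have hp := hρ.eigenvalues_nonneg
  have hq := hσ.eigenvalues_nonneg
  have hp1 : ∑ i, hρ.isHermitian.eigenvalues i = 1 := by
    apply Complex.ofReal_injective
    rw [Complex.ofReal_sum, Complex.ofReal_one, ← hρ1]
    exact hρ.isHermitian.trace_eq_sum_eigenvalues.symm
  rw [mlog, mlog, dif_pos hρ.isHermitian, dif_pos hσ.isHermitian]
  generalize hρ.isHermitian.eigenvectorUnitary = U at *
  generalize hσ.isHermitian.eigenvectorUnitary = V at *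
  generalize hρ.isHermitian.eigenvalues = p at *
  generalize hσ.isHermitian.eigenvalues = q at *
  rw [eσ, eρ] at h
  have hform := sum_mul_normSq_le U V p q c h
  have hsingle : ∀ (y : n → ℂ) i,
      p i * Complex.normSq (((star (U : Matrix n n ℂ) * (V : Matrix n n ℂ)) *ᵥ y) i) ≤
      c * ∑ j, q j * Complex.normSq (y j) := fun y i =>
    (Finset.single_le_sum (f := fun i =>
      p i * Complex.normSq (((star (U : Matrix n n ℂ) * (V : Matrix n n ℂ)) *ᵥ y) i))
      (fun i _ => mul_nonneg (hp i) (Complex.normSq_nonneg _)) (Finset.mem_univ i)).trans (hform y)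
  rw [eρ, trace_mul_diagonal_conj, trace_mul_diagonal_conj, ← Complex.ofReal_sub,
    Complex.ofReal_re, ← Finset.sum_sub_distrib]
  calc _ ≤ ∑ i, p i * Real.log c := Finset.sum_le_sum fun i _ => ?_
    _ = Real.log c := by rw [← Finset.sum_mul, hp1, one_mul]
  rw [← mul_sub]
  rcases (hp i).eq_or_lt with hi | hi
  · simp [← hi]
  refine mul_le_mul_of_nonneg_left ?_ (hp i)
  simp only [overlap_self, ite_mul, one_mul, zero_mul, Finset.sum_ite_eq, Finset.mem_univ,
    if_true]
  refine log_sub_sum_mul_log_le hi hc (fun j => Complex.normSq_nonneg _) hq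
    (sum_overlap_eq_one U V i) (fun j hj => ?_) ?_
  · have := hsingle (Pi.single j 1) i
    rw [mulVec_single_one, Finset.sum_eq_single j
      (fun k _ hk => by simp [Pi.single_eq_of_ne hk]) (by simp), hj, zero_mul, mul_zero] at this
    exact le_antisymm (nonpos_of_mul_nonpos_right this hi) (Complex.normSq_nonneg _)
  · set s := ∑ j, overlap (U : Matrix n n ℂ) V i j / q j with hs
    have := hsingle
      (fun j => star ((star (U : Matrix n n ℂ) * (V : Matrix n n ℂ)) i j) / (q j : ℂ)) i
    have e1 : ((star (U : Matrix n n ℂ) * (V : Matrix n n ℂ)) *ᵥ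
        fun j => star ((star (U : Matrix n n ℂ) * (V : Matrix n n ℂ)) i j) / (q j : ℂ)) i =
          (s : ℂ) := by
      simp only [hs, mulVec, dotProduct, Complex.ofReal_sum, Complex.ofReal_div, overlap,
        Complex.normSq_eq_conj_mul_self, RCLike.star_def]
      exact Finset.sum_congr rfl fun j _ => by ring
    have e2 : ∑ j, q j *
        Complex.normSq (star ((star (U : Matrix n n ℂ) * (V : Matrix n n ℂ)) i j) / (q j : ℂ)) =
        s := by
      refine Finset.sum_congr rfl fun j _ => ?_
      rw [Complex.normSq_div, Complex.normSq_ofReal, RCLike.star_def, Complex.normSq_conj, overlap]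
      rcases eq_or_ne (q j) 0 with hj | hj
      · simp [hj]
      · field_simp
    rw [e1, e2, Complex.normSq_ofReal] at this
    have hs0 : 0 ≤ s := Finset.sum_nonneg fun j _ => div_nonneg (Complex.normSq_nonneg _) (hq j)
    rcases hs0.eq_or_lt with h0 | h0
    · rw [← h0, mul_zero]
      exact hc.le
    · exact le_of_mul_le_mul_right (by linarith) h0

open Matrix in
/-- The support of `ρ` is contained in that of `σ` as soon as `ρ ≤ c σ`. -/
theorem mulVec_eq_zero_of_posSemidef_smul_sub {n : Type*} [Fintype n]
    {ρ σ : Matrix n n ℂ} (hρ : ρ.PosSemidef) {c : ℂ} (h : (c • σ - ρ).PosSemidef)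
    {v : n → ℂ} (hv : σ *ᵥ v = 0) : ρ *ᵥ v = 0 := by
  have h1 := h.dotProduct_mulVec_nonneg v
  rw [sub_mulVec, smul_mulVec, hv, smul_zero, zero_sub, dotProduct_neg, neg_nonneg] at h1
  exact (hρ.dotProduct_mulVec_zero_iff v).1 (le_antisymm h1 (hρ.dotProduct_mulVec_nonneg v))

theorem maxRelEnt_ge_relEnt {n : Type*} [Fintype n] [DecidableEq n]
    (ρ σ : Matrix n n ℂ) (hρ : IsDensity ρ) (hσ : IsDensity σ) :
    relEnt ρ σ ≤ maxRelEnt ρ σ := by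
  refine le_sInf ?_
  rintro _ ⟨r, rfl, h⟩
  have hsupp : ∀ v : n → ℂ, σ.mulVec v = 0 → ρ.mulVec v = 0 :=
    fun v => mulVec_eq_zero_of_posSemidef_smul_sub hρ.1 h
  have hr : 0 ≤ r := by
    have ht := h.trace_nonneg
    rw [Matrix.trace_sub, Matrix.trace_smul, hρ.2, hσ.2, smul_eq_mul, mul_one, sub_nonneg] at ht
    have h1 : (1 : ℝ) ≤ 2 ^ r := by exact_mod_cast ht
    by_contra! hr
    exact h1.not_gt (Real.rpow_lt_one_of_one_lt_of_neg one_lt_two hr)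
  rw [relEnt, if_pos hsupp, EReal.coe_le_coe_iff]
  calc _ ≤ Real.log (2 ^ r) := trace_mul_mlog_sub_le_log hρ hσ.1 (by positivity) h
    _ = r * Real.log 2 := Real.log_rpow two_pos r
    _ ≤ r := mul_le_of_le_one_right hr (by linarith [Real.log_two_lt_d9])
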